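/- Let D ⊆ ℝⁿ (n ≥ 1) be a nonempty bounded convex open set. The Funk distance is realized by the Funk Finsler structure F_F(x,v) := gauge (D − x) v: for all x, y ∈ D, d_F(x,y) equals the infimum, over all continuously differentiable curves η : [0,1] → D with η(0) = x and η(1) = y, of ∫₀¹ gauge (D − η(t)) (η'(t)) dt. -/

import Mathlib

/-!
A point `z + r⁻¹ • v` lies in `D` exactly when `gauge (D - z) v < r` (`gauge_sub_lt_iff`), which
turns every estimate of the Finsler structure into a membership in `D`.

For `x ≠ y` let `y' = x + T • (y - x)`, `T > 1`, be the frontier point on the ray from `x` through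
`y`, so that the Funk distance is `log (T / (T - 1))`.

* Along the straight segment the integrand is at most `1 / (T - t)`, since the half-open segment
  from `x` to `y'` lies in `D`; integrating gives length at most `log (T / (T - 1))`.
* Hahn–Banach gives a linear functional `f` with `f < f y'` on `D`, whence
  `gauge (D - z) v ≥ f v / (f y' - f z)`. Along a curve the right-hand side is the derivative of
  `-log (f y' - f (η t))`, so every length is at least
  `log ((f y' - f x) / (f y' - f y)) = log (T / (T - 1))`.

Both integral comparisons require the integrand to be integrable; this holds since it is upper
semicontinuous along a `C¹` curve (`intervalIntegrable_gauge_curve`).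
-/

open Set MeasureTheory

section

variable {n : ℕ} {D : Set (EuclideanSpace ℝ (Fin n))}

lemma convex_sub_image (hconv : Convex ℝ D) (z : EuclideanSpace ℝ (Fin n)) :
    Convex ℝ ((· - z) '' D) := by
  simpa [sub_eq_add_neg, add_comm] using hconv.translate (-z)

lemma gauge_sub_lt_iff (hconv : Convex ℝ D) (hopen : IsOpen D)
    {z : EuclideanSpace ℝ (Fin n)} (hz : z ∈ D) (v : EuclideanSpace ℝ (Fin n))
    {r : ℝ} (hr : 0 < r) :
    gauge ((· - z) '' D) v < r ↔ z + r⁻¹ • v ∈ D := by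
  have hc : Convex ℝ ((· - z) '' D) := convex_sub_image hconv z
  have ho : IsOpen ((· - z) '' D) := (Homeomorph.subRight z).isOpenMap D hopen
  have h0 : (0 : EuclideanSpace ℝ (Fin n)) ∈ (· - z) '' D := ⟨z, hz, sub_self z⟩
  have h1 := Set.ext_iff.1 (setOfPred_gauge_lt_one_eq_self_of_isOpen hc h0 ho) (r⁻¹ • v)
  rw [mem_ofPred_eq, gauge_smul_of_nonneg (inv_nonneg.2 hr.le), smul_eq_mul,
    inv_mul_lt_one₀ hr] at h1
  rw [h1]
  constructor
  · rintro ⟨w, hw, h⟩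
    rw [← h]; simpa using hw
  · intro h
    exact ⟨_, h, by simp⟩

/-- Upper semicontinuity of the integrand yields both measurability and a bound on `[0, 1]`. -/
lemma intervalIntegrable_gauge_curve (hconv : Convex ℝ D) (hopen : IsOpen D)
    {η : ℝ → EuclideanSpace ℝ (Fin n)} (hη : ContDiff ℝ 1 η)
    (hD : ∀ t ∈ Icc (0 : ℝ) 1, η t ∈ D) :
    IntervalIntegrable (fun t => gauge ((· - η t) '' D) (deriv η t)) volume 0 1 := by
  set g : ℝ → ℝ := fun t => gauge ((· - η t) '' D) (deriv η t) with hg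
  have hd : Continuous (deriv η) := hη.continuous_deriv le_rfl
  have hpre : ∀ r : ℝ, IsOpen {t | η t + r⁻¹ • deriv η t ∈ D} := fun r =>
    hopen.preimage (hη.continuous.add (hd.const_smul r⁻¹))
  have hlt : ∀ t ∈ Icc (0 : ℝ) 1, ∀ r, 0 < r → (g t < r ↔ η t + r⁻¹ • deriv η t ∈ D) :=
    fun t ht r hr => gauge_sub_lt_iff hconv hopen (hD t ht) _ hr
  have husc : UpperSemicontinuousOn g (Icc 0 1) := by
    intro t ht r hr
    have hr0 : 0 < r := (gauge_nonneg _).trans_lt hr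
    have := (hpre r).mem_nhds ((hlt t ht r hr0).1 hr)
    filter_upwards [mem_nhdsWithin_of_mem_nhds this, self_mem_nhdsWithin] with s hs hs'
    exact (hlt s hs' r hr0).2 hs
  obtain ⟨C, hC⟩ := husc.bddAbove_of_isCompact isCompact_Icc
  have hmeas : Measurable ((Icc (0 : ℝ) 1).indicator g) := by
    refine measurable_of_Iio fun r => ?_
    rcases le_or_gt r 0 with hr | hr
    · convert MeasurableSet.empty
      ext t
      simpa using hr.trans (indicator_nonneg (fun _ _ => gauge_nonneg _) t)
    · have : (Icc (0 : ℝ) 1).indicator g ⁻¹' Iio r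
          = (Icc (0 : ℝ) 1)ᶜ ∪ {t | η t + r⁻¹ • deriv η t ∈ D} ∩ Icc 0 1 := by
        ext t
        by_cases ht : t ∈ Icc (0 : ℝ) 1
        · simp only [mem_preimage, indicator_of_mem ht, mem_Iio, hlt t ht r hr, mem_union,
            mem_compl_iff, ht, not_true, false_or, mem_inter_iff, mem_ofPred_eq, and_true]
        · simp only [mem_preimage, indicator_of_notMem ht, mem_Iio, hr, mem_union,
            mem_compl_iff, ht, not_false_eq_true, true_or]
      rw [this]
      exact measurableSet_Icc.compl.union ((hpre r).measurableSet.inter measurableSet_Icc)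
  have hint : IntegrableOn ((Icc (0 : ℝ) 1).indicator g) (Icc 0 1) := by
    refine Measure.integrableOn_of_bounded (M := C) (by simp) hmeas.aestronglyMeasurable ?_
    filter_upwards [ae_restrict_mem measurableSet_Icc] with t ht
    rw [indicator_of_mem ht, Real.norm_of_nonneg (gauge_nonneg _)]
    exact hC (mem_image_of_mem g ht)
  rw [intervalIntegrable_iff_integrableOn_Icc_of_le zero_le_one]
  exact hint.congr_fun (fun t ht => indicator_of_mem ht g) measurableSet_Icc

/-- The ray from `x` through `y` meets the frontier beyond `y`; the parameter is the inverse of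
`gauge (D - x) (y - x)`. -/
lemma exists_frontier_on_ray (hbdd : Bornology.IsBounded D) (hconv : Convex ℝ D)
    (hopen : IsOpen D) {x y : EuclideanSpace ℝ (Fin n)} (hx : x ∈ D) (hy : y ∈ D)
    (hxy : x ≠ y) : ∃ T : ℝ, 1 < T ∧ x + T • (y - x) ∈ frontier D := by
  set S := (· - x) '' D with hS
  have hc : Convex ℝ S := convex_sub_image hconv x
  have ho : IsOpen S := (Homeomorph.subRight x).isOpenMap D hopen
  have h0 : (0 : EuclideanSpace ℝ (Fin n)) ∈ S := ⟨x, hx, sub_self x⟩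
  have hnhds : S ∈ nhds 0 := ho.mem_nhds h0
  have hb : Bornology.IsBounded S := by
    have := (LipschitzWith.id.sub (LipschitzWith.const x)).isBounded_image hbdd
    simpa [hS] using this
  have hpos : 0 < gauge S (y - x) :=
    (gauge_pos (absorbent_nhds_zero hnhds)
      (NormedSpace.isVonNBounded_of_isBounded ℝ hb)).2 (sub_ne_zero.2 hxy.symm)
  have hlt : gauge S (y - x) < 1 :=
    (gauge_sub_lt_iff hconv hopen hx _ one_pos).2 (by simpa using hy)
  refine ⟨(gauge S (y - x))⁻¹, (one_lt_inv₀ hpos).2 hlt, ?_⟩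
  have hfr : (gauge S (y - x))⁻¹ • (y - x) ∈ frontier S := by
    rw [← gauge_eq_one_iff_mem_frontier hc hnhds, gauge_smul_of_nonneg (inv_nonneg.2 hpos.le),
      smul_eq_mul, inv_mul_cancel₀ hpos.ne']
  have himg : frontier S = (· - x) '' frontier D :=
    ((Homeomorph.subRight x).image_frontier D).symm
  rw [himg] at hfr
  obtain ⟨w, hw, h⟩ := hfr
  rw [← h]
  simpa using hw

/-- The lower bound for lengths: `gauge (D - z) v` dominates the Funk structure
`f v / (c - f z)` of the half-space `f < c` containing `D`, which integrates explicitly. -/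
lemma length_ge_of_functional (hconv : Convex ℝ D) (hopen : IsOpen D)
    (f : EuclideanSpace ℝ (Fin n) →L[ℝ] ℝ) {c : ℝ} (hf : ∀ z ∈ D, f z < c)
    {η : ℝ → EuclideanSpace ℝ (Fin n)} (hη : ContDiff ℝ 1 η)
    (hD : ∀ t ∈ Icc (0 : ℝ) 1, η t ∈ D) :
    Real.log (c - f (η 0)) - Real.log (c - f (η 1)) ≤
      ∫ t in (0 : ℝ)..1, gauge ((· - η t) '' D) (deriv η t) := by
  have hd : Continuous (deriv η) := hη.continuous_deriv le_rfl
  have hpos : ∀ t ∈ Icc (0 : ℝ) 1, 0 < c - f (η t) := fun t ht => sub_pos.2 (hf _ (hD t ht))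
  have hint : IntervalIntegrable (fun t => f (deriv η t) / (c - f (η t))) volume 0 1 := by
    refine ContinuousOn.intervalIntegrable ?_
    rw [uIcc_of_le zero_le_one]
    exact (f.continuous.comp hd).continuousOn.div
      (continuous_const.sub (f.continuous.comp hη.continuous)).continuousOn
      fun t ht => (hpos t ht).ne'
  have hftc : ∫ t in (0 : ℝ)..1, f (deriv η t) / (c - f (η t)) =
      -Real.log (c - f (η 1)) - -Real.log (c - f (η 0)) := by
    refine intervalIntegral.integral_eq_sub_of_hasDerivAt
      (f := fun t => -Real.log (c - f (η t))) (fun t ht => ?_) hint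
    rw [uIcc_of_le zero_le_one] at ht
    have h1 : HasDerivAt η (deriv η t) t :=
      (hη.differentiable one_ne_zero).differentiableAt.hasDerivAt
    have h2 : HasDerivAt (fun s => f (η s)) (f (deriv η t)) t := f.hasFDerivAt.comp_hasDerivAt t h1
    have h3 := ((h2.const_sub c).log (hpos t ht).ne').neg
    exact h3.congr_deriv (by ring)
  have hle := intervalIntegral.integral_mono_on zero_le_one hint
    (intervalIntegrable_gauge_curve hconv hopen hη hD) fun t ht => by
      refine le_of_forall_gt fun r hr => ?_
      have hr0 : 0 < r := (gauge_nonneg _).trans_lt hr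
      have := hf _ ((gauge_sub_lt_iff hconv hopen (hD t ht) _ hr0).1 hr)
      rw [map_add, map_smul, smul_eq_mul, ← lt_sub_iff_add_lt', inv_mul_lt_iff₀ hr0] at this
      rwa [div_lt_iff₀ (hpos t ht)]
  linarith

/-- Straight segments realize the distance: the integrand is at most `(T - t)⁻¹`. -/
lemma length_segment_le (hconv : Convex ℝ D) (hopen : IsOpen D)
    {x y : EuclideanSpace ℝ (Fin n)} {T : ℝ} (hT : 1 < T)
    (hray : ∀ s, 0 ≤ s → s < T → x + s • (y - x) ∈ D) :
    ∫ t in (0 : ℝ)..1, gauge ((· - (x + t • (y - x))) '' D)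
      (deriv (fun t : ℝ => x + t • (y - x)) t) ≤ Real.log (T / (T - 1)) := by
  have hη : ContDiff ℝ 1 (fun t : ℝ => x + t • (y - x)) := by fun_prop
  have hD : ∀ t ∈ Icc (0 : ℝ) 1, x + t • (y - x) ∈ D :=
    fun t ht => hray t ht.1 (ht.2.trans_lt hT)
  have hderiv : ∀ t : ℝ, deriv (fun t : ℝ => x + t • (y - x)) t = y - x := fun t => by
    simpa using (((hasDerivAt_id t).smul_const (y - x)).const_add x).deriv
  have hpos : ∀ t ∈ Icc (0 : ℝ) 1, 0 < T - t := fun t ht => by linarith [ht.2]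
  have hint : IntervalIntegrable (fun t : ℝ => (T - t)⁻¹) volume 0 1 := by
    refine ContinuousOn.intervalIntegrable ?_
    rw [uIcc_of_le zero_le_one]
    exact (continuous_const.sub continuous_id).continuousOn.inv₀ fun t ht => (hpos t ht).ne'
  have hftc : ∫ t in (0 : ℝ)..1, (T - t)⁻¹ = -Real.log (T - 1) - -Real.log (T - 0) := by
    refine intervalIntegral.integral_eq_sub_of_hasDerivAt
      (f := fun t => -Real.log (T - t)) (fun t ht => ?_) hint
    rw [uIcc_of_le zero_le_one] at ht
    have h3 := (((hasDerivAt_id t).const_sub T).log (hpos t ht).ne').neg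
    exact h3.congr_deriv (by simp [neg_div])
  have hle := intervalIntegral.integral_mono_on zero_le_one
    (intervalIntegrable_gauge_curve hconv hopen hη hD) hint fun t ht => by
      refine le_of_forall_gt fun r hr => ?_
      have hr0 : 0 < r := (inv_pos.2 (hpos t ht)).trans hr
      rw [hderiv, gauge_sub_lt_iff hconv hopen (hD t ht) _ hr0, add_assoc, ← add_smul]
      refine hray _ (add_nonneg ht.1 (inv_nonneg.2 hr0.le)) ?_
      have := inv_lt_of_inv_lt₀ (hpos t ht) hr
      linarith
  rw [Real.log_div (by linarith) (by linarith)]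
  simp only [sub_zero] at hftc
  linarith


/-- `dF` is the Funk distance of the bounded convex open set `D`: `dF x x = 0`, and for
distinct `x, y ∈ D`, if `y'` is the point where the ray from `x` through `y` meets the
frontier of `D`, then `dF x y = log (‖x − y'‖ / ‖y − y'‖)`. -/
def IsFunkDist {n : ℕ} (D : Set (EuclideanSpace ℝ (Fin n)))
    (dF : EuclideanSpace ℝ (Fin n) → EuclideanSpace ℝ (Fin n) → ℝ) : Prop :=
  (∀ x ∈ D, dF x x = 0) ∧
  ∀ x ∈ D, ∀ y ∈ D, x ≠ y → ∀ y' ∈ frontier D, ∀ t : ℝ, 0 < t →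
    y' = x + t • (y - x) → dF x y = Real.log (‖x - y'‖ / ‖y - y'‖)

end

/-- The Funk distance is realized by the Funk Finsler structure
`F_F(x,v) = gauge (D − x) v`: `d_F(x,y)` is the infimum of the Finsler lengths
`∫₀¹ gauge (D − η(t)) (η'(t)) dt` over C¹ curves `η` in `D` from `x` to `y`. -/
theorem funkDist_eq_inf_finsler_length {n : ℕ} (hn : 1 ≤ n)
    (D : Set (EuclideanSpace ℝ (Fin n))) (hne : D.Nonempty)
    (hbdd : Bornology.IsBounded D) (hconv : Convex ℝ D) (hopen : IsOpen D)
    (dF : EuclideanSpace ℝ (Fin n) → EuclideanSpace ℝ (Fin n) → ℝ)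
    (hdF : IsFunkDist D dF) :
    ∀ x ∈ D, ∀ y ∈ D,
      dF x y = sInf { L : ℝ | ∃ η : ℝ → EuclideanSpace ℝ (Fin n),
        ContDiff ℝ 1 η ∧ (∀ t ∈ Set.Icc (0 : ℝ) 1, η t ∈ D) ∧
        η 0 = x ∧ η 1 = y ∧
        L = ∫ t in (0 : ℝ)..1, gauge ((· - η t) '' D) (deriv η t) } := by
  intro x hx y hy
  by_cases hxy : x = y
  · subst hxy
    rw [hdF.1 x hx]
    symm
    apply IsLeast.csInf_eq
    refine ⟨⟨fun _ => x, contDiff_const, fun _ _ => hx, rfl, rfl, by simp⟩, ?_⟩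
    rintro L ⟨η, -, -, -, -, rfl⟩
    exact intervalIntegral.integral_nonneg zero_le_one fun t _ => gauge_nonneg _
  obtain ⟨T, hT, hfr⟩ := exists_frontier_on_ray hbdd hconv hopen hx hy hxy
  have hT1 : 0 < T - 1 := by linarith
  have hdist : dF x y = Real.log (T / (T - 1)) := by
    rw [hdF.2 x hx y hy hxy _ hfr T (by linarith) rfl]
    have hn : ‖y - x‖ ≠ 0 := norm_ne_zero_iff.2 (sub_ne_zero.2 (Ne.symm hxy))
    have e1 : x - (x + T • (y - x)) = (-T) • (y - x) := by module
    have e2 : y - (x + T • (y - x)) = (-(T - 1)) • (y - x) := by module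
    rw [e1, e2, norm_smul, norm_smul, mul_div_mul_right _ _ hn, norm_neg, norm_neg,
      Real.norm_of_nonneg (by linarith), Real.norm_of_nonneg hT1.le]
  have hray : ∀ s, 0 ≤ s → s < T → x + s • (y - x) ∈ D := by
    intro s hs hsT
    have hT0 : 0 < T := by linarith
    have hcomb := hconv.combo_interior_closure_mem_interior (hopen.interior_eq.symm ▸ hx)
      hfr.1 (a := 1 - s / T) (b := s / T) (sub_pos.2 ((div_lt_one hT0).2 hsT))
      (div_nonneg hs hT0.le) (by ring)
    rw [hopen.interior_eq] at hcomb
    convert hcomb using 1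
    have : s = s / T * T := by field_simp
    nth_rewrite 1 [this]
    module
  have hnot : x + T • (y - x) ∉ D := fun h => by
    rw [hopen.frontier_eq] at hfr
    exact hfr.2 h
  obtain ⟨f, hf⟩ := geometric_hahn_banach_open_point hconv hopen hnot
  have hlower : ∀ η : ℝ → EuclideanSpace ℝ (Fin n), ContDiff ℝ 1 η →
      (∀ t ∈ Icc (0 : ℝ) 1, η t ∈ D) → η 0 = x → η 1 = y → Real.log (T / (T - 1)) ≤
        ∫ t in (0 : ℝ)..1, gauge ((· - η t) '' D) (deriv η t) := by
    intro η hη hD h0 h1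
    have key := length_ge_of_functional hconv hopen f hf hη hD
    have hx' := hf x hx
    rw [h0, h1] at key
    simp only [map_add, map_smul, map_sub, smul_eq_mul] at key hx'
    have hp : 0 < f y - f x := pos_of_mul_pos_right (a := T) (by linarith) (by linarith)
    have e1 : f x + T * (f y - f x) - f x = T * (f y - f x) := by ring
    have e2 : f x + T * (f y - f x) - f y = (T - 1) * (f y - f x) := by ring
    rw [e1, e2, Real.log_mul (by linarith) hp.ne', Real.log_mul hT1.ne' hp.ne'] at key
    rw [Real.log_div (by linarith) hT1.ne']
    linarith
  have hη : ContDiff ℝ 1 (fun t : ℝ => x + t • (y - x)) := by fun_prop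
  have hD : ∀ t ∈ Icc (0 : ℝ) 1, x + t • (y - x) ∈ D :=
    fun t ht => hray t ht.1 (ht.2.trans_lt hT)
  rw [hdist]
  symm
  apply IsLeast.csInf_eq
  refine ⟨⟨_, hη, hD, by simp, by simp, le_antisymm
    (hlower _ hη hD (by simp) (by simp)) (length_segment_le hconv hopen hT hray)⟩, ?_⟩
  rintro L ⟨η, h1, h2, h3, h4, rfl⟩
  exact hlower η h1 h2 h3 h4
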